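/- Let N ≥ 2, 1 ≤ k ≤ N, and let F be a real number with 0 ≤ F ≤ k/N. Then the density matrix ρ_F on ℂ^N ⊗ ℂ^N belongs to S_k; that is, ρ_F admits a decomposition ρ_F = Σ_i p_i |ψ_i⟩⟨ψ_i| with p_i ≥ 0, Σ_i p_i = 1, and each unit vector ψ_i of Schmidt rank at most k. -/

import Mathlib

open Matrix BigOperators
open scoped ComplexOrder

/-- The `n × n` matrix `M_ψ` associated to a vector `ψ ∈ ℂ^α ⊗ ℂ^β`,
with entries `(M_ψ)_{ij} = ⟨e_i ⊗ e_j, ψ⟩ = ψ (i, j)`. -/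
def matOfVec {α β : Type*} (ψ : α × β → ℂ) : Matrix α β ℂ :=
  Matrix.of fun i j => ψ (i, j)

/-- The Schmidt rank of a bipartite vector is the rank of its associated matrix. -/
noncomputable def schmidtRank {α β : Type*} [Fintype β] (ψ : α × β → ℂ) : ℕ :=
  (matOfVec ψ).rank

/-- `ψ` is a unit vector. -/
def IsUnitVec {γ : Type*} [Fintype γ] (ψ : γ → ℂ) : Prop :=
  ∑ x, Complex.normSq (ψ x) = 1

/-- The outer product `|ψ⟩⟨ψ|`. -/
def outer {γ : Type*} (ψ : γ → ℂ) : Matrix γ γ ℂ :=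
  Matrix.of fun x y => ψ x * star (ψ y)

/-- `ρ ∈ S_k`: `ρ` admits a decomposition `ρ = ∑ i, p i • |ψ i⟩⟨ψ i|` with `p i ≥ 0`,
`∑ i, p i = 1`, each `ψ i` a unit vector of Schmidt rank at most `k`. -/
def InSchmidtClass {α : Type*} [Fintype α] (k : ℕ)
    (ρ : Matrix (α × α) (α × α) ℂ) : Prop :=
  ∃ (m : ℕ) (p : Fin m → ℝ) (ψ : Fin m → α × α → ℂ),
    (∀ i, 0 ≤ p i) ∧ (∑ i, p i) = 1 ∧
    (∀ i, IsUnitVec (ψ i)) ∧ (∀ i, schmidtRank (ψ i) ≤ k) ∧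
    ρ = ∑ i, (p i : ℂ) • outer (ψ i)

/-- The map `1 ⊗ Λ`, applying `Λ` to each block of a matrix indexed by `γ × Fin n`. -/
def blockMap {γ : Type*} {n m : ℕ}
    (Λ : Matrix (Fin n) (Fin n) ℂ → Matrix (Fin m) (Fin m) ℂ)
    (X : Matrix (γ × Fin n) (γ × Fin n) ℂ) : Matrix (γ × Fin m) (γ × Fin m) ℂ :=
  Matrix.of fun a b => Λ (Matrix.of fun s t => X (a.1, s) (b.1, t)) a.2 b.2

/-- `Λ` is Hermiticity-preserving: `Λ(X†) = Λ(X)†`. -/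
def HermPreserving {n m : ℕ}
    (Λ : Matrix (Fin n) (Fin n) ℂ → Matrix (Fin m) (Fin m) ℂ) : Prop :=
  ∀ X, Λ Xᴴ = (Λ X)ᴴ

/-- `Λ` is `k`-positive: `(1 ⊗ Λ)(|ψ⟩⟨ψ|)` is positive semidefinite for every
unit vector `ψ ∈ ℂ^N ⊗ ℂ^N` of Schmidt rank at most `k`. -/
def kPositive {N : ℕ} (k : ℕ)
    (Λ : Matrix (Fin N) (Fin N) ℂ → Matrix (Fin N) (Fin N) ℂ) : Prop :=
  ∀ ψ : Fin N × Fin N → ℂ, IsUnitVec ψ → schmidtRank ψ ≤ k →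
    (blockMap Λ (outer ψ)).PosSemidef

/-- The maximally entangled state `Ψ⁺ = (1/√N) ∑ i, e i ⊗ e i`. -/
noncomputable def psiPlus (N : ℕ) : Fin N × Fin N → ℂ :=
  fun x => if x.1 = x.2 then ((Real.sqrt N : ℂ))⁻¹ else 0

/-- The isotropic state `ρ_F = F |Ψ⁺⟩⟨Ψ⁺| + ((1−F)/(N²−1)) (I − |Ψ⁺⟩⟨Ψ⁺|)`. -/
noncomputable def rhoF (N : ℕ) (F : ℝ) : Matrix (Fin N × Fin N) (Fin N × Fin N) ℂ :=
  (F : ℂ) • outer (psiPlus N) +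
    (((1 - F) / ((N : ℝ) ^ 2 - 1) : ℝ) : ℂ) •
      ((1 : Matrix (Fin N × Fin N) (Fin N × Fin N) ℂ) - outer (psiPlus N))

/-!
The set `S_k` is the trace-one slice of a convex cone that is invariant under conjugation by local
unitaries. Let `Ω = ∑ i, e i ⊗ e i` and let `D` be the diagonal matrix with diagonal `Ω`, that is,
the projection onto the span of the vectors `e i ⊗ e i`. Averaging `|φ⟩⟨φ|` over all `U ⊗ Ū` with
`U` a monomial matrix of cube roots of unity gives, up to a positive factor and with `M = M_φ`,

`(|tr M|² - ∑ |M_ii|²) |Ω⟩⟨Ω| + (N ∑ |M_ii|² - |tr M|²) D + (∑ |M_ij|² - ∑ |M_ii|²) (1 - D)`.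

For a coordinate projection `M` of rank `k` the third term vanishes, and for a projection onto `k`
Fourier modes the second one does; a positive combination of the two is proportional to
`ρ_{k/N}`. Product vectors with `tr M = 0` give `ρ_0` in the same way, and the remaining `ρ_F` lie
on the segment between `ρ_0` and `ρ_{k/N}`.
-/

section Averaging

lemma card_nsmul_sum_smul_eq {G X M : Type*} [Group G] [Fintype G] [MulAction G X]
    [AddCommMonoid M] {s : Finset X} {x : X} (hs : (s : Set X) = MulAction.orbit G x)
    (f : X → M) : s.card • ∑ g : G, f (g • x) = Fintype.card G • ∑ y ∈ s, f y := by
  have hmem : ∀ y, y ∈ s ↔ y ∈ MulAction.orbit G x := fun y => by rw [← hs, Finset.mem_coe]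
  have sum_smul_orbit : ∀ y ∈ s, ∑ g : G, f (g • y) = ∑ g : G, f (g • x) := by
    intro y hy
    obtain ⟨h, rfl⟩ := (hmem y).1 hy
    simpa [mul_smul] using Equiv.sum_comp (Equiv.mulRight h) fun g => f (g • x)
  have sum_orbit_smul : ∀ g : G, ∑ y ∈ s, f (g • y) = ∑ y ∈ s, f y := fun g =>
    Finset.sum_equiv (MulAction.toPerm g)
      (by simp [hmem, ← MulAction.orbit_eq_iff, MulAction.orbit_smul]) (by simp)
  calc s.card • ∑ g : G, f (g • x) = ∑ y ∈ s, ∑ g : G, f (g • y) := by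
        rw [Finset.sum_congr rfl sum_smul_orbit, Finset.sum_const]
    _ = ∑ g : G, ∑ y ∈ s, f (g • y) := Finset.sum_comm
    _ = Fintype.card G • ∑ y ∈ s, f y := by
        rw [Finset.sum_congr rfl fun g _ => sum_orbit_smul g, Finset.sum_const, Finset.card_univ]

variable {ι M : Type*} [Fintype ι]

lemma card_nsmul_sum_perm [DecidableEq ι] [AddCommMonoid M] (f : ι → M) (i : ι) :
    Fintype.card ι • ∑ σ : Equiv.Perm ι, f (σ i) = (Fintype.card ι).factorial • ∑ p, f p := by
  have horbit : ((Finset.univ : Finset ι) : Set ι) = MulAction.orbit (Equiv.Perm ι) i := by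
    rw [Finset.coe_univ, MulAction.orbit_eq_univ]
  simpa [Fintype.card_perm] using card_nsmul_sum_smul_eq horbit f

lemma coe_offDiag_eq_orbit_perm {i j : ι} (hij : i ≠ j) :
    ((Finset.univ : Finset ι).offDiag : Set (ι × ι)) =
      MulAction.orbit (Equiv.Perm ι) (i, j) := by
  ext ⟨p, q⟩
  simp only [Finset.coe_offDiag, Finset.coe_univ, Set.mem_offDiag, Set.mem_univ, true_and,
    MulAction.mem_orbit_iff, Prod.smul_mk, Equiv.Perm.smul_def, Prod.mk.injEq]
  constructor
  · exact MulAction.is_two_pretransitive_iff.1 (Equiv.Perm.isMultiplyPretransitive ι 2) hij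
  · rintro ⟨σ, rfl, rfl⟩
    exact σ.injective.ne hij

lemma card_mul_card_sub_one_mul_sum_perm [DecidableEq ι] [CommRing M] (f : ι × ι → M)
    {i j : ι} (hij : i ≠ j) :
    (Fintype.card ι * (Fintype.card ι - 1) : M) * ∑ σ : Equiv.Perm ι, f (σ i, σ j) =
      (Fintype.card ι).factorial * (∑ x, f x - ∑ p, f (p, p)) := by
  have hsplit : ∑ x, f x - ∑ p, f (p, p) = ∑ x ∈ Finset.univ.offDiag, f x := by
    rw [sub_eq_iff_eq_add', ← Finset.univ_product_univ, ← Finset.diag_union_offDiag,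
      Finset.sum_union (Finset.disjoint_diag_offDiag _), Finset.sum_diag]
  have hcard : ((Finset.univ : Finset ι).offDiag.card : M) =
      Fintype.card ι * (Fintype.card ι - 1) := by
    rw [Finset.offDiag_card, Nat.cast_sub (Nat.le_mul_self _), Finset.card_univ]
    push_cast
    ring
  rw [hsplit, ← hcard, ← nsmul_eq_mul, ← nsmul_eq_mul, ← Fintype.card_perm]
  exact card_nsmul_sum_smul_eq (coe_offDiag_eq_orbit_perm hij) f

end Averaging

section SchmidtRank

variable {α β α' β' : Type*} [Fintype β] [Fintype β']

lemma schmidtRank_le_of_matOfVec_eq_mul [Fintype α'] {φ : α' × β' → ℂ} {ψ : α × β → ℂ}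
    {A : Matrix α α' ℂ} {B : Matrix β' β ℂ} (h : matOfVec ψ = A * matOfVec φ * B) :
    schmidtRank ψ ≤ schmidtRank φ := by
  rw [schmidtRank, h]
  exact (Matrix.rank_mul_le_left _ B).trans (Matrix.rank_mul_le_right A _)

lemma schmidtRank_smul_le (c : ℂ) (φ : α × β → ℂ) : schmidtRank (c • φ) ≤ schmidtRank φ := by
  classical
  refine (Matrix.rank_mul_le_left (matOfVec φ) (c • (1 : Matrix β β ℂ))).trans_eq' ?_
  rw [Matrix.mul_smul, Matrix.mul_one]
  rfl

lemma schmidtRank_comp_prodMap_le (φ : α' × β' → ℂ) (f : α → α') (g : β → β') :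
    schmidtRank (φ ∘ Prod.map f g) ≤ schmidtRank φ :=
  Matrix.rank_submatrix_le (matOfVec φ) f g

lemma schmidtRank_product_le_one (u : α → ℂ) (v : β → ℂ) :
    schmidtRank (fun x => u x.1 * v x.2) ≤ 1 :=
  Matrix.rank_vecMulVec_le u v

lemma schmidtRank_sum_product_le_card {κ : Type*} (s : Finset κ) (u : κ → α → ℂ)
    (v : κ → β → ℂ) : schmidtRank (fun x => ∑ m ∈ s, u m x.1 * v m x.2) ≤ s.card := by
  have hfactor : matOfVec (fun x : α × β => ∑ m ∈ s, u m x.1 * v m x.2) =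
      (Matrix.of fun i (m : s) => u m i) * (Matrix.of fun (m : s) j => v m j) := by
    ext i j
    exact (Finset.sum_coe_sort s fun m => u m i * v m j).symm
  rw [schmidtRank, hfactor, ← Fintype.card_coe s]
  exact (Matrix.rank_mul_le_left _ _).trans (Matrix.rank_le_card_width _)

end SchmidtRank

section SchmidtCone

lemma outer_smul {γ : Type*} (c : ℂ) (φ : γ → ℂ) :
    outer (c • φ) = Complex.normSq c • outer φ := by
  ext x y
  simp only [outer, Matrix.of_apply, Matrix.smul_apply, Pi.smul_apply, smul_eq_mul, star_mul',
    Complex.real_smul, ← Complex.mul_conj, starRingEnd_apply]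
  ring

lemma trace_outer {γ : Type*} [Fintype γ] (φ : γ → ℂ) :
    (outer φ).trace = ((∑ x, Complex.normSq (φ x) : ℝ) : ℂ) := by
  simp [Matrix.trace, outer, Complex.mul_conj]

/-- The convex cone generated by the projections onto unit vectors of Schmidt rank at most `k`;
its elements of trace `1` are the states in `S_k`. -/
noncomputable def schmidtCone (α : Type*) [Fintype α] (k : ℕ) :
    PointedCone ℝ (Matrix (α × α) (α × α) ℂ) :=
  PointedCone.hull ℝ {A | ∃ ψ : α × α → ℂ, IsUnitVec ψ ∧ schmidtRank ψ ≤ k ∧ outer ψ = A}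

variable {α : Type*} [Fintype α] {k l : ℕ}

lemma schmidtCone_mono (h : k ≤ l) : schmidtCone α k ≤ schmidtCone α l :=
  Submodule.span_mono fun _ ⟨ψ, hψ, hrank, hA⟩ => ⟨ψ, hψ, hrank.trans h, hA⟩

lemma outer_mem_schmidtCone {φ : α × α → ℂ} (hφ : schmidtRank φ ≤ k) :
    outer φ ∈ schmidtCone α k := by
  rcases eq_or_ne φ 0 with rfl | hne
  · convert (schmidtCone α k).zero_mem
    ext x y
    simp [outer]
  set n : ℝ := ∑ x, Complex.normSq (φ x) with hn
  have hn0 : 0 < n := by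
    obtain ⟨x, hx⟩ := Function.ne_iff.1 hne
    exact Finset.sum_pos' (fun y _ => Complex.normSq_nonneg (φ y))
      ⟨x, Finset.mem_univ x, Complex.normSq_pos.2 hx⟩
  set c : ℂ := (√n : ℂ)⁻¹
  have hc : Complex.normSq c = n⁻¹ := by
    rw [map_inv₀, Complex.normSq_ofReal, Real.mul_self_sqrt hn0.le]
  have hunit : IsUnitVec (c • φ) := by
    simp [IsUnitVec, hc, ← Finset.mul_sum, ← hn, hn0.ne']
  have hscale : outer φ = n • outer (c • φ) := by
    rw [outer_smul, hc, smul_inv_smul₀ hn0.ne']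
  rw [hscale]
  exact PointedCone.smul_mem _ hn0.le
    (PointedCone.subset_hull ⟨c • φ, hunit, (schmidtRank_smul_le c φ).trans hφ, rfl⟩)

lemma inSchmidtClass_of_mem_schmidtCone {ρ : Matrix (α × α) (α × α) ℂ}
    (hρ : ρ ∈ schmidtCone α k) (htrace : ρ.trace = 1) : InSchmidtClass k ρ := by
  obtain ⟨m, p, A, rfl⟩ := Submodule.mem_span_set'.1 hρ
  choose ψ hunit hrank hA using fun i => (A i).2
  have hsum : ∑ i, p i • (A i : Matrix (α × α) (α × α) ℂ) =
      ∑ i, ((p i : ℝ) : ℂ) • outer (ψ i) :=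
    Finset.sum_congr rfl fun i _ => by rw [hA]; rfl
  refine ⟨m, fun i => p i, ψ, fun i => (p i).2, ?_, hunit, hrank, hsum⟩
  simp only [IsUnitVec] at hunit
  rw [hsum] at htrace
  simp only [Matrix.trace_sum, Matrix.trace_smul, trace_outer, hunit, Complex.ofReal_one,
    smul_eq_mul, mul_one] at htrace
  exact_mod_cast htrace

end SchmidtCone

/-- The unnormalised maximally entangled vector `∑ i, e i ⊗ e i`. -/
def maxEntangled (ι : Type*) [DecidableEq ι] : ι × ι → ℂ :=
  fun x => if x.1 = x.2 then 1 else 0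

section Twirl

variable {ι : Type*} [DecidableEq ι]

/-- The average of `outer φ` under conjugation by the local unitaries `U ⊗ Ū`, `U` diagonal. -/
def diagonalTwirl (φ : ι × ι → ℂ) : Matrix (ι × ι) (ι × ι) ℂ :=
  Matrix.of fun x y => if x = y ∨ (x.1 = x.2 ∧ y.1 = y.2) then outer φ x y else 0

-- Over `ZMod 2` this fails, as `e i - e j = e j - e i`; hence the cube roots of unity in `rephase`.
lemma single_sub_single_eq_single_sub_single_iff {R : Type*} [Ring R] (htwo : (2 : R) ≠ 0)
    {i j k l : ι} :
    (Pi.single i 1 - Pi.single j 1 : ι → R) = Pi.single k 1 - Pi.single l 1 ↔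
      (i = k ∧ j = l) ∨ (i = j ∧ k = l) := by
  have : Nontrivial R := ⟨2, 0, htwo⟩
  have single_inj {p q : ι} (h : (Pi.single p 1 : ι → R) = Pi.single q 1) : p = q :=
    by simpa [Pi.single_apply] using congrFun h p
  refine ⟨fun h => ?_, by rintro (⟨rfl, rfl⟩ | ⟨rfl, rfl⟩) <;> simp⟩
  by_cases hij : i = j
  · subst hij
    rw [sub_self] at h
    exact Or.inr ⟨rfl, single_inj (sub_eq_zero.1 h.symm)⟩
  have hik : i = k := by
    by_contra hik
    have hcoord : (1 : R) = -if i = l then 1 else 0 := by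
      simpa [Pi.single_apply, hij, hik] using congrFun h i
    split_ifs at hcoord
    · exact htwo (by rw [← one_add_one_eq_two, ← eq_neg_iff_add_eq_zero, ← hcoord])
    · simp at hcoord
  subst hik
  exact Or.inl ⟨rfl, single_inj (sub_right_injective h)⟩

variable [Fintype ι] {k : ℕ}

lemma addChar_apply_mul_star {G : Type*} [AddCommGroup G] [Finite G] (χ : AddChar G ℂ) (a b : G) :
    χ a * star (χ b) = χ (a - b) := by
  rw [sub_eq_add_neg, AddChar.map_add_eq_mul, AddChar.map_neg_eq_conj, starRingEnd_apply]

/-- `(U ⊗ Ū) φ` for the diagonal unitary `U` with phases `χ (e i)`, where `e i` is the standard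
basis of `(ℤ/3)^ι`. -/
def rephase (χ : AddChar (ι → ZMod 3) ℂ) (φ : ι × ι → ℂ) : ι × ι → ℂ :=
  fun x => χ (Pi.single x.1 1 - Pi.single x.2 1) * φ x

lemma schmidtRank_rephase_le (χ : AddChar (ι → ZMod 3) ℂ) (φ : ι × ι → ℂ) :
    schmidtRank (rephase χ φ) ≤ schmidtRank φ := by
  refine schmidtRank_le_of_matOfVec_eq_mul
    (A := Matrix.diagonal fun i => χ (Pi.single i 1))
    (B := Matrix.diagonal fun j => star (χ (Pi.single j 1))) ?_
  ext i j
  simp only [matOfVec, rephase, Matrix.of_apply, Matrix.mul_diagonal, Matrix.diagonal_mul,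
    ← addChar_apply_mul_star]
  ring

lemma sum_outer_rephase (φ : ι × ι → ℂ) :
    ∑ χ, outer (rephase χ φ) = (Fintype.card (ι → ZMod 3) : ℝ) • diagonalTwirl φ := by
  ext x y
  have hentry (χ : AddChar (ι → ZMod 3) ℂ) : outer (rephase χ φ) x y =
      χ (Pi.single x.1 1 - Pi.single x.2 1 - (Pi.single y.1 1 - Pi.single y.2 1)) *
        outer φ x y := by
    simp only [outer, rephase, Matrix.of_apply, star_mul', ← addChar_apply_mul_star χ (_ - _)]
    ring
  have hcond : (Pi.single x.1 1 - Pi.single x.2 1 - (Pi.single y.1 1 - Pi.single y.2 1) :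
      ι → ZMod 3) = 0 ↔ x = y ∨ (x.1 = x.2 ∧ y.1 = y.2) := by
    rw [sub_eq_zero, single_sub_single_eq_single_sub_single_iff (by decide), Prod.ext_iff]
  simp only [Matrix.sum_apply, hentry, ← Finset.sum_mul, AddChar.sum_apply_eq_ite, hcond,
    diagonalTwirl, Matrix.smul_apply, Matrix.of_apply]
  split_ifs <;> simp

lemma diagonalTwirl_mem_schmidtCone {φ : ι × ι → ℂ} (hφ : schmidtRank φ ≤ k) :
    diagonalTwirl φ ∈ schmidtCone ι k := by
  rw [← inv_smul_smul₀ (Nat.cast_ne_zero.2 Fintype.card_ne_zero :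
    (Fintype.card (ι → ZMod 3) : ℝ) ≠ 0) (diagonalTwirl φ), ← sum_outer_rephase]
  exact PointedCone.smul_mem _ (by positivity) <| Submodule.sum_mem _ fun χ _ =>
    outer_mem_schmidtCone ((schmidtRank_rephase_le χ φ).trans hφ)

lemma card_mul_sum_perm_outer_diag (φ : ι × ι → ℂ) (i : ι) :
    (Fintype.card ι : ℂ) * ∑ σ : Equiv.Perm ι, outer φ (σ i, σ i) (σ i, σ i) =
      (Fintype.card ι).factorial * (∑ p, Complex.normSq (φ (p, p)) : ℝ) := by
  rw [← nsmul_eq_mul, card_nsmul_sum_perm (fun p => outer φ (p, p) (p, p)), nsmul_eq_mul]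
  simp [outer, Complex.mul_conj]

lemma card_mul_sum_perm_outer_diag_diag (φ : ι × ι → ℂ) {i j : ι} (hij : i ≠ j) :
    (Fintype.card ι * (Fintype.card ι - 1) : ℂ) *
        ∑ σ : Equiv.Perm ι, outer φ (σ i, σ i) (σ j, σ j) =
      (Fintype.card ι).factorial *
        (Complex.normSq (∑ p, φ (p, p)) - ∑ p, Complex.normSq (φ (p, p)) : ℝ) := by
  rw [card_mul_card_sub_one_mul_sum_perm (fun x => outer φ (x.1, x.1) (x.2, x.2)) hij,
    Complex.ofReal_sub, ← Complex.mul_conj]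
  simp [outer, Complex.mul_conj, Fintype.sum_prod_type, ← Finset.sum_mul_sum]

lemma card_mul_sum_perm_outer_offDiag (φ : ι × ι → ℂ) {i j : ι} (hij : i ≠ j) :
    (Fintype.card ι * (Fintype.card ι - 1) : ℂ) *
        ∑ σ : Equiv.Perm ι, outer φ (σ i, σ j) (σ i, σ j) =
      (Fintype.card ι).factorial *
        (∑ x, Complex.normSq (φ x) - ∑ p, Complex.normSq (φ (p, p)) : ℝ) := by
  rw [card_mul_card_sub_one_mul_sum_perm (fun x => outer φ x x) hij]
  simp [outer, Complex.mul_conj]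

lemma sum_diagonalTwirl_comp_perm (φ : ι × ι → ℂ) {a b c : ℝ}
    (ha : Complex.normSq (∑ i, φ (i, i)) = a) (hb : ∑ i, Complex.normSq (φ (i, i)) = b)
    (hc : ∑ x, Complex.normSq (φ x) = c) :
    (Fintype.card ι * (Fintype.card ι - 1) : ℝ) •
        ∑ σ : Equiv.Perm ι, diagonalTwirl (φ ∘ Prod.map σ σ) =
      ((Fintype.card ι).factorial : ℝ) • ((a - b) • outer (maxEntangled ι) +
        (Fintype.card ι * b - a) • Matrix.diagonal (maxEntangled ι) +
        (c - b) • (1 - Matrix.diagonal (maxEntangled ι))) := by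
  have hentry (σ : Equiv.Perm ι) (x y : ι × ι) : outer (φ ∘ Prod.map σ σ) x y =
      outer φ (σ x.1, σ x.2) (σ y.1, σ y.2) := rfl
  ext ⟨i, j⟩ ⟨k, l⟩
  simp only [Matrix.smul_apply, Matrix.add_apply, Matrix.sub_apply, Matrix.sum_apply,
    Matrix.one_apply, Matrix.diagonal_apply, diagonalTwirl, Matrix.of_apply, hentry,
    Complex.real_smul, Prod.mk.injEq]
  push_cast
  by_cases hij : i = j
  · subst hij
    by_cases hkl : k = l
    · subst hkl
      by_cases hik : i = k
      · subst hik
        have hpopulation := card_mul_sum_perm_outer_diag φ i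
        rw [hb] at hpopulation
        suffices (Fintype.card ι * (Fintype.card ι - 1) : ℂ) *
            ∑ σ : Equiv.Perm ι, outer φ (σ i, σ i) (σ i, σ i) =
            (Fintype.card ι).factorial * ((a - b) + (Fintype.card ι * b - a)) by
          simpa [outer, maxEntangled] using this
        linear_combination (Fintype.card ι - 1 : ℂ) * hpopulation
      · simpa [maxEntangled, outer, hik, ha, hb] using card_mul_sum_perm_outer_diag_diag φ hik
    · have hx : ¬ (i = k ∧ i = l) := fun h => hkl (h.1.symm.trans h.2)
      simp [outer, maxEntangled, hkl, hx]
  · by_cases hx : i = k ∧ j = l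
    · obtain ⟨rfl, rfl⟩ := hx
      simpa [outer, maxEntangled, hij, hb, hc] using card_mul_sum_perm_outer_offDiag φ hij
    · simp [outer, maxEntangled, hij, hx]

lemma twirl_mem_schmidtCone {φ : ι × ι → ℂ} (hφ : schmidtRank φ ≤ k) {a b c : ℝ}
    (ha : Complex.normSq (∑ i, φ (i, i)) = a) (hb : ∑ i, Complex.normSq (φ (i, i)) = b)
    (hc : ∑ x, Complex.normSq (φ x) = c) :
    (a - b) • outer (maxEntangled ι) +
      (Fintype.card ι * b - a) • Matrix.diagonal (maxEntangled ι) +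
      (c - b) • (1 - Matrix.diagonal (maxEntangled ι)) ∈ schmidtCone ι k := by
  have hcard : (0 : ℝ) ≤ Fintype.card ι * (Fintype.card ι - 1) := by
    rcases (Fintype.card ι).eq_zero_or_pos with h | h
    · simp [h]
    · exact mul_nonneg (Nat.cast_nonneg _) (sub_nonneg.2 (Nat.one_le_cast.2 h))
  have hfactorial : ((Fintype.card ι).factorial : ℝ) ≠ 0 :=
    Nat.cast_ne_zero.2 (Fintype.card ι).factorial_ne_zero
  rw [← inv_smul_smul₀ hfactorial (_ + _), ← sum_diagonalTwirl_comp_perm φ ha hb hc]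
  refine PointedCone.smul_mem _ (by positivity) <| PointedCone.smul_mem _ hcard <|
    Submodule.sum_mem _ fun σ _ => diagonalTwirl_mem_schmidtCone ?_
  exact (schmidtRank_comp_prodMap_le φ σ σ).trans hφ

end Twirl

section Isotropic

lemma coordinate_twirl_mem_schmidtCone {ι : Type*} [Fintype ι] [DecidableEq ι] {k : ℕ} (hk : 1 ≤ k)
    (hkι : k ≤ Fintype.card ι) :
    (k - 1 : ℝ) • outer (maxEntangled ι) +
      (Fintype.card ι - k : ℝ) • Matrix.diagonal (maxEntangled ι) ∈ schmidtCone ι k := by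
  obtain ⟨s, -, hs⟩ := Finset.exists_subset_card_eq (s := (Finset.univ : Finset ι)) hkι
  set φ : ι × ι → ℂ := fun x => if x.1 = x.2 ∧ x.1 ∈ s then 1 else 0
  have hmat : matOfVec φ = Matrix.diagonal fun i => if i ∈ s then 1 else 0 := by
    ext i j
    simp [matOfVec, φ, Matrix.diagonal_apply, ite_and]
  have hrank : schmidtRank φ ≤ k := by
    rw [schmidtRank, hmat, Matrix.rank_diagonal]
    simp [hs]
  have htwirl := twirl_mem_schmidtCone hrank (a := k ^ 2) (b := k) (c := k)
    (by simp [φ, hs, sq]) (by simp [φ, hs, apply_ite])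
    (by simp [φ, hs, apply_ite, Fintype.sum_prod_type, ite_and])
  have hk0 : (k : ℝ) ≠ 0 := by positivity
  convert PointedCone.smul_mem _ (by positivity : 0 ≤ (k : ℝ)⁻¹) htwirl using 1
  match_scalars <;> field_simp <;> ring

variable {G : Type*} [AddCommGroup G] [Fintype G]

lemma sum_normSq_sum_addChar (s : Finset (AddChar G ℂ)) :
    ∑ x, Complex.normSq (∑ χ ∈ s, χ x) = Fintype.card G * s.card := by
  classical
  have hexpand (x : G) : (Complex.normSq (∑ χ ∈ s, χ x) : ℂ) =
      ∑ χ ∈ s, ∑ χ' ∈ s, (χ - χ') x := by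
    rw [← Complex.mul_conj, map_sum, Finset.sum_mul_sum]
    simp only [AddChar.sub_apply, AddChar.map_neg_eq_conj]
  apply Complex.ofReal_injective
  push_cast
  calc ∑ x, (Complex.normSq (∑ χ ∈ s, χ x) : ℂ)
      = ∑ χ ∈ s, ∑ χ' ∈ s, ∑ x, (χ - χ') x := by
        simp only [hexpand]
        rw [Finset.sum_comm]
        exact Finset.sum_congr rfl fun χ _ => Finset.sum_comm
    _ = Fintype.card G * s.card := by
        simp [AddChar.sum_eq_ite, sub_eq_zero, mul_comm]

lemma fourier_twirl_mem_schmidtCone [DecidableEq G] {k : ℕ} (hk : 1 ≤ k)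
    (hkG : k ≤ Fintype.card G) :
    (k * (Fintype.card G - 1) : ℝ) • outer (maxEntangled G) +
      (Fintype.card G - k : ℝ) • (1 - Matrix.diagonal (maxEntangled G)) ∈ schmidtCone G k := by
  obtain ⟨s, -, hs⟩ := Finset.exists_subset_card_eq
    (s := (Finset.univ : Finset (AddChar G ℂ))) (hkG.trans_eq AddChar.card_eq.symm)
  set N : ℝ := (Fintype.card G : ℝ) with hN
  set φ : G × G → ℂ := fun x => ∑ χ ∈ s, χ (x.1 - x.2)
  have hrank : schmidtRank φ ≤ k := by
    simp only [φ, ← addChar_apply_mul_star, ← hs]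
    exact schmidtRank_sum_product_le_card s (fun χ x => χ x) fun χ y => star (χ y)
  have hnorm : ∑ x, Complex.normSq (φ x) = N * (N * k) := by
    calc ∑ x, Complex.normSq (φ x)
        = ∑ x : G, ∑ y : G, Complex.normSq (∑ χ ∈ s, χ (x - y)) := Fintype.sum_prod_type _
      _ = ∑ _x : G, ∑ z : G, Complex.normSq (∑ χ ∈ s, χ z) :=
          Finset.sum_congr rfl fun x _ =>
            Equiv.sum_comp (Equiv.subLeft x) fun z => Complex.normSq (∑ χ ∈ s, χ z)
      _ = N * (N * k) := by simp [sum_normSq_sum_addChar, hs, hN]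
  have htwirl := twirl_mem_schmidtCone hrank (a := (N * k) ^ 2) (b := N * k ^ 2)
    (by simp [φ, hs, hN, sq, mul_mul_mul_comm]) (by simp [φ, hs, hN, sq]) hnorm
  have hN0 : N ≠ 0 := Nat.cast_ne_zero.2 Fintype.card_ne_zero
  have hk0 : (k : ℝ) ≠ 0 := by positivity
  convert PointedCone.smul_mem _ (by positivity : 0 ≤ (N * k)⁻¹) htwirl using 1
  rw [← hN]
  match_scalars <;> field_simp
  ring

lemma upper_isotropic_mem_schmidtCone [DecidableEq G] {k : ℕ} (hk : 1 ≤ k)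
    (hkG : k ≤ Fintype.card G) :
    (Fintype.card G * k - 1 : ℝ) • outer (maxEntangled G) + (Fintype.card G - k : ℝ) • 1 ∈
      schmidtCone G k := by
  convert (schmidtCone G k).add_mem (coordinate_twirl_mem_schmidtCone hk hkG)
    (fourier_twirl_mem_schmidtCone hk hkG) using 1
  match_scalars <;> ring

lemma lower_isotropic_mem_schmidtCone {ι : Type*} [Fintype ι] [DecidableEq ι] [Nontrivial ι] :
    (Fintype.card ι : ℝ) • 1 - outer (maxEntangled ι) ∈ schmidtCone ι 1 := by
  obtain ⟨p, q, hpq⟩ := exists_pair_ne ι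
  have hbalanced := twirl_mem_schmidtCone (a := 0) (b := 2) (c := 4)
    (schmidtRank_product_le_one (Pi.single p 1 + Pi.single q 1 : ι → ℂ)
      (Pi.single p 1 - Pi.single q 1))
    (by simp [Pi.single_apply, mul_sub, hpq, hpq.symm])
    (by
      rw [Fintype.sum_eq_add p q hpq fun i hi => by simp [hi.1, hi.2]]
      norm_num [hpq, hpq.symm])
    (by
      simp only [map_mul, Fintype.sum_prod_type, ← Finset.sum_mul_sum]
      rw [Fintype.sum_eq_add p q hpq fun i hi => by simp [hi.1, hi.2],
        Fintype.sum_eq_add p q hpq fun i hi => by simp [hi.1, hi.2]]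
      norm_num [hpq, hpq.symm])
  have hoffDiag := twirl_mem_schmidtCone (a := 0) (b := 0) (c := 1)
    (schmidtRank_product_le_one (Pi.single p 1 : ι → ℂ) (Pi.single q 1))
    (by simp [Pi.single_apply, hpq.symm])
    (by simp [Pi.single_apply, hpq.symm, apply_ite])
    (by simp [Pi.single_apply, apply_ite, Fintype.sum_prod_type])
  have hcard : (0 : ℝ) ≤ Fintype.card ι - 1 :=
    sub_nonneg.2 (Nat.one_le_cast.2 Fintype.card_pos)
  convert (schmidtCone ι 1).add_mem
    (PointedCone.smul_mem _ (by norm_num : (0 : ℝ) ≤ 1 / 2) hbalanced)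
    (PointedCone.smul_mem _ hcard hoffDiag) using 1
  match_scalars <;> ring

end Isotropic

section RhoF

variable {N k : ℕ}

lemma outer_psiPlus : outer (psiPlus N) = (N : ℝ)⁻¹ • outer (maxEntangled (Fin N)) := by
  have hscale : psiPlus N = (√N : ℂ)⁻¹ • maxEntangled (Fin N) := by
    ext x
    simp [psiPlus, maxEntangled]
  rw [hscale, outer_smul, map_inv₀, Complex.normSq_ofReal, Real.mul_self_sqrt N.cast_nonneg]

lemma isUnitVec_psiPlus [NeZero N] : IsUnitVec (psiPlus N) := by
  simp [IsUnitVec, psiPlus, Fintype.sum_prod_type, apply_ite]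

lemma rhoF_eq_real_smul (F : ℝ) : rhoF N F = F • outer (psiPlus N) +
    ((1 - F) / ((N : ℝ) ^ 2 - 1)) • (1 - outer (psiPlus N)) := rfl

lemma trace_rhoF (hN : 2 ≤ N) (F : ℝ) : (rhoF N F).trace = 1 := by
  have : NeZero N := ⟨by omega⟩
  have hpsi : (outer (psiPlus N)).trace = 1 := by
    rw [trace_outer, isUnitVec_psiPlus, Complex.ofReal_one]
  have hdim : (N : ℂ) ^ 2 - 1 ≠ 0 := by
    rw [sub_ne_zero]
    exact_mod_cast (Nat.one_lt_pow two_ne_zero hN).ne'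
  simp only [rhoF, Matrix.trace_add, Matrix.trace_smul, Matrix.trace_sub, hpsi, Matrix.trace_one,
    Fintype.card_prod, Fintype.card_fin, smul_eq_mul]
  push_cast
  field_simp
  ring

lemma rhoF_convex_combination (t F F' : ℝ) :
    rhoF N (t * F + (1 - t) * F') = t • rhoF N F + (1 - t) • rhoF N F' := by
  simp only [rhoF_eq_real_smul]
  match_scalars <;> ring

lemma rhoF_zero_mem_schmidtCone (hN : 2 ≤ N) : rhoF N 0 ∈ schmidtCone (Fin N) 1 := by
  have : Nontrivial (Fin N) := Fin.nontrivial_iff_two_le.2 hN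
  have hN' : (1 : ℝ) < N := Nat.one_lt_cast.2 hN
  have hdim : 0 < (N : ℝ) ^ 2 - 1 := by nlinarith
  convert PointedCone.smul_mem _ (by positivity : 0 ≤ ((N : ℝ) * (N ^ 2 - 1))⁻¹)
    (lower_isotropic_mem_schmidtCone (ι := Fin N)) using 1
  rw [rhoF_eq_real_smul, outer_psiPlus, Fintype.card_fin]
  match_scalars <;> field_simp <;> ring

lemma rhoF_div_mem_schmidtCone (hN : 2 ≤ N) (hk : 1 ≤ k) (hkN : k ≤ N) :
    rhoF N (k / N) ∈ schmidtCone (Fin N) k := by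
  have : NeZero N := ⟨by omega⟩
  have hN' : (1 : ℝ) < N := Nat.one_lt_cast.2 hN
  have hdim : 0 < (N : ℝ) ^ 2 - 1 := by nlinarith
  convert PointedCone.smul_mem _ (by positivity : 0 ≤ ((N : ℝ) * (N ^ 2 - 1))⁻¹)
    (upper_isotropic_mem_schmidtCone (G := Fin N) hk (by simpa using hkN)) using 1
  rw [rhoF_eq_real_smul, outer_psiPlus, Fintype.card_fin]
  match_scalars <;> field_simp
  ring

end RhoF

/-- For `N ≥ 2`, `1 ≤ k ≤ N` and `0 ≤ F ≤ k/N`, the isotropic state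
`ρ_F` belongs to `S_k`. -/
theorem rhoF_in_schmidt_class {N k : ℕ} (hN : 2 ≤ N) (hk : 1 ≤ k) (hkN : k ≤ N)
    (F : ℝ) (hF0 : 0 ≤ F) (hF : F ≤ (k : ℝ) / N) :
    InSchmidtClass k (rhoF N F) := by
  have hN0 : (0 : ℝ) < N := by positivity
  have hk0 : (0 : ℝ) < k := by positivity
  set t : ℝ := F * N / k with ht
  have ht0 : 0 ≤ t := by positivity
  have ht1 : t ≤ 1 := (div_le_one hk0).2 ((le_div_iff₀ hN0).1 hF)
  have hmix : rhoF N F = t • rhoF N (k / N) + (1 - t) • rhoF N 0 := by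
    rw [← rhoF_convex_combination, ht]
    congr 1
    field_simp
    ring
  refine inSchmidtClass_of_mem_schmidtCone ?_ (trace_rhoF hN F)
  rw [hmix]
  exact add_mem
    (PointedCone.smul_mem _ ht0 (rhoF_div_mem_schmidtCone hN hk hkN))
    (PointedCone.smul_mem _ (sub_nonneg.2 ht1)
      (schmidtCone_mono hk (rhoF_zero_mem_schmidtCone hN)))
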